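/- A labeled planar binary tree avoids the three patterns x(*, x(*,*)), x(*, y(*,*)), and y(*, y(*,*)) if and only if it belongs to the least class N of trees satisfying: leaf ∈ N, and for all u, v ∈ N the trees x(u, leaf), y(u, leaf), and y(u, x(v, leaf)) belong to N. Equivalently, every nontrivial normal monomial of the operad noncom-Zin has exactly one of the three forms x(u, leaf), y(u, leaf), y(u, x(v, leaf)) with u, v normal. -/

import Mathlib

/-- Planar binary trees with internal vertices labeled by one of two symbols `x`, `y`. -/
inductive LTree : Type
  | leaf : LTree
  | x : LTree → LTree → LTree
  | y : LTree → LTree → LTree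

namespace LTree

/-- The subtree relation. -/
inductive Subtree : LTree → LTree → Prop
  | refl (t : LTree) : Subtree t t
  | xl {s u v : LTree} : Subtree s u → Subtree s (x u v)
  | xr {s u v : LTree} : Subtree s v → Subtree s (x u v)
  | yl {s u v : LTree} : Subtree s u → Subtree s (y u v)
  | yr {s u v : LTree} : Subtree s v → Subtree s (y u v)

/-- A tree matches (at the root) one of the three forbidden patterns
`x(*, x(*,*))`, `x(*, y(*,*))`, `y(*, y(*,*))`. -/
def IsBadZin : LTree → Prop
  | x _ (x _ _) => True
  | x _ (y _ _) => True
  | y _ (y _ _) => True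
  | _ => False

/-- A tree avoids the three patterns iff no subtree matches one of them. -/
def AvoidsZin (t : LTree) : Prop := ∀ s : LTree, Subtree s t → ¬ IsBadZin s

/-- The least class `N` of trees containing `leaf` and closed under the three
normal-form constructions of the operad noncom-Zin. -/
inductive NormalZin : LTree → Prop
  | leaf : NormalZin leaf
  | xleaf {u : LTree} : NormalZin u → NormalZin (x u leaf)
  | yleaf {u : LTree} : NormalZin u → NormalZin (y u leaf)
  | yx {u v : LTree} : NormalZin u → NormalZin v → NormalZin (y u (x v leaf))

end LTree

theorem LTree.normal_of_avoids (t : LTree) (h : LTree.AvoidsZin t) : LTree.NormalZin t := by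
  induction t with
  | leaf => exact .leaf
  | x u v ihu ihv =>
    have hu := ihu (fun s hs => h s (.xl hs))
    cases v with
    | leaf => exact .xleaf hu
    | x a b => exact absurd trivial (h _ (.refl _))
    | y a b => exact absurd trivial (h _ (.refl _))
  | y u v ihu ihv =>
    have hu := ihu (fun s hs => h s (.yl hs))
    have hv := ihv (fun s hs => h s (.yr hs))
    cases v with
    | leaf => exact .yleaf hu
    | x a b =>
      cases hv with
      | xleaf ha => exact .yx hu ha
    | y a b => exact absurd trivial (h _ (.refl _))

theorem LTree.avoids_of_normal (t : LTree) (h : LTree.NormalZin t) : LTree.AvoidsZin t := by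
  induction h with
  | leaf =>
    intro s hs
    cases hs
    exact id
  | xleaf _ ih =>
    intro s hs
    cases hs with
    | refl => exact id
    | xl h => exact ih _ h
    | xr h => cases h; exact id
  | yleaf _ ih =>
    intro s hs
    cases hs with
    | refl => exact id
    | yl h => exact ih _ h
    | yr h => cases h; exact id
  | yx _ _ ihu ihv =>
    intro s hs
    cases hs with
    | refl => exact id
    | yl h => exact ihu _ h
    | yr h =>
      cases h with
      | refl => exact id
      | xl h => exact ihv _ h
      | xr h => cases h; exact id

open LTree in
/-- A labeled planar binary tree avoids the three patterns `x(*, x(*,*))`,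
`x(*, y(*,*))`, `y(*, y(*,*))` iff it belongs to the least class `N`;
equivalently, every nontrivial normal monomial of noncom-Zin has exactly one of
the three forms `x(u, leaf)`, `y(u, leaf)`, `y(u, x(v, leaf))` with `u`, `v` normal. -/
theorem noncomZin_normal_forms :
    (∀ t : LTree, AvoidsZin t ↔ NormalZin t) ∧
    (∀ t : LTree, NormalZin t → t ≠ LTree.leaf →
      (∃ u, NormalZin u ∧ t = LTree.x u LTree.leaf) ∨
      (∃ u, NormalZin u ∧ t = LTree.y u LTree.leaf) ∨
      (∃ u v, NormalZin u ∧ NormalZin v ∧ t = LTree.y u (LTree.x v LTree.leaf))) := by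
  refine ⟨fun t => ⟨LTree.normal_of_avoids t, LTree.avoids_of_normal t⟩, ?_⟩
  intro t ht hne
  cases ht with
  | leaf => exact absurd rfl hne
  | xleaf hu => exact Or.inl ⟨_, hu, rfl⟩
  | yleaf hu => exact Or.inr (Or.inl ⟨_, hu, rfl⟩)
  | yx hu hv => exact Or.inr (Or.inr ⟨_, _, hu, hv, rfl⟩)
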